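/- arXiv:1705.01052 — 2 statements merged into one kernel-verified Lean document; each statement's English description precedes it below -/
import Mathlib

section
/- Let σ > 0 and set s := 1 + 1/σ. Define f : ℝ → ℝ by f(ρ) := e^{−1/ρ^σ} for ρ > 0 and f(ρ) := 0 for ρ ≤ 0. Then f is of class C^∞ on ℝ and is Gevrey of order s on every compact interval of ℝ: for every compact interval [a,b] there exist constants C, R > 0 such that |f^{(p)}(ρ)| ≤ C (p!)^s / R^p for all ρ ∈ [a,b] and all integers p ≥ 0. -/
open Real Set Filter

/-- The function `f(ρ) = e^{-1/ρ^σ}` for `ρ > 0`, extended by `0` for `ρ ≤ 0`. -/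
noncomputable def gevreyBump (σ : ℝ) (ρ : ℝ) : ℝ :=
  if 0 < ρ then Real.exp (-1 / ρ ^ σ) else 0

/-! On `ρ > 0` the function `ρ ↦ e^{-1/ρ^σ}` extends holomorphically to the slit plane. As
`z ↦ z ^ (-σ)` is homogeneous, there is a `θ ∈ (0, 1)`, independent of `ρ`, such that
`Re (z ^ (-σ)) ≥ ρ ^ (-σ) / 2` on the disc of radius `θ ρ` around `ρ`. Cauchy's estimate on this
disc gives `|f^{(p)}(ρ)| ≤ p! e^{-ρ^{-σ}/2} / (θ ρ)^p`. Maximising over `ρ` costs a further factor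
`(p!)^{1/σ}` up to a geometric one, whence the order `1 + 1/σ`; the same exponential decay beats
every power of `ρ` at `0⁺`, so all derivatives extend by zero across the origin. -/

open scoped Topology ContDiff

section ZeroExtension

variable {E : Type*} [NormedAddCommGroup E] [NormedSpace ℝ E] {g : ℝ → E} {a : ℝ}

lemma hasDerivAt_indicator_Ioi (hg : ∀ x ∈ Ioi a, DifferentiableAt ℝ g x)
    (hflat : g =o[𝓝[>] a] fun x ↦ x - a) (x : ℝ) :
    HasDerivAt ((Ioi a).indicator g) ((Ioi a).indicator (deriv g) x) x := by
  rcases lt_trichotomy x a with hx | rfl | hx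
  · rw [indicator_of_notMem (notMem_Ioi.2 hx.le)]
    refine (hasDerivAt_const x (0 : E)).congr_of_eventuallyEq ?_
    filter_upwards [Iio_mem_nhds hx] with y hy
    exact indicator_of_notMem (notMem_Ioi.2 (le_of_lt hy)) g
  · rw [indicator_of_notMem self_notMem_Ioi, hasDerivAt_iff_isLittleO,
      indicator_of_notMem self_notMem_Ioi, ← nhdsLE_sup_nhdsGT]
    simp only [smul_zero, sub_zero]
    refine .sup ?_ (hflat.congr' ?_ .rfl)
    · refine (Asymptotics.isLittleO_zero _ _).congr' ?_ .rfl
      filter_upwards [self_mem_nhdsWithin] with y hy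
      exact (indicator_of_notMem (notMem_Ioi.2 hy) g).symm
    · filter_upwards [self_mem_nhdsWithin] with y hy
      exact (indicator_of_mem hy g).symm
  · rw [indicator_of_mem (mem_Ioi.2 hx)]
    refine (hg x hx).hasDerivAt.congr_of_eventuallyEq ?_
    filter_upwards [Ioi_mem_nhds hx] with y hy
    exact indicator_of_mem hy g

lemma iteratedDeriv_indicator_Ioi
    (hg : ∀ n, ∀ x ∈ Ioi a, DifferentiableAt ℝ (iteratedDeriv n g) x)
    (hflat : ∀ n, iteratedDeriv n g =o[𝓝[>] a] fun x ↦ x - a) (n : ℕ) :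
    iteratedDeriv n ((Ioi a).indicator g) = (Ioi a).indicator (iteratedDeriv n g) := by
  induction n with
  | zero => simp only [iteratedDeriv_zero]
  | succ n ih =>
    ext x
    rw [iteratedDeriv_succ, ih, iteratedDeriv_succ]
    exact (hasDerivAt_indicator_Ioi (hg n) (hflat n) x).deriv

lemma contDiff_indicator_Ioi
    (hg : ∀ n, ∀ x ∈ Ioi a, DifferentiableAt ℝ (iteratedDeriv n g) x)
    (hflat : ∀ n, iteratedDeriv n g =o[𝓝[>] a] fun x ↦ x - a) :
    ContDiff ℝ ∞ ((Ioi a).indicator g) := by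
  refine contDiff_of_differentiable_iteratedDeriv fun n _ x ↦ ?_
  rw [iteratedDeriv_indicator_Ioi hg hflat]
  exact (hasDerivAt_indicator_Ioi (hg n) (hflat n) x).differentiableAt

end ZeroExtension

section RealPart

variable {F : ℂ → ℂ} {x : ℝ}

lemma iteratedDeriv_re_ofReal (hF : AnalyticAt ℂ F x) (n : ℕ) :
    iteratedDeriv n (fun y : ℝ ↦ (F y).re) x = (iteratedDeriv n F x).re := by
  induction n generalizing x with
  | zero => simp only [iteratedDeriv_zero]
  | succ n ih =>
    have ih_near : iteratedDeriv n (fun y : ℝ ↦ (F y).re) =ᶠ[𝓝 x]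
        fun y : ℝ ↦ (iteratedDeriv n F y).re :=
      (Complex.continuous_ofReal.continuousAt.eventually hF.eventually_analyticAt).mono
        fun _ hy ↦ ih hy
    have hdiff : DifferentiableAt ℂ (iteratedDeriv n F) x := by
      rw [iteratedDeriv_eq_iterate]
      exact (hF.iterated_deriv n).differentiableAt
    rw [iteratedDeriv_succ, iteratedDeriv_succ, ih_near.deriv_eq]
    exact hdiff.hasDerivAt.real_of_complex.deriv

lemma differentiableAt_iteratedDeriv_re_ofReal (hF : AnalyticAt ℂ F x) (n : ℕ) :
    DifferentiableAt ℝ (iteratedDeriv n fun y : ℝ ↦ (F y).re) x := by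
  rw [iteratedDeriv_eq_iterate]
  exact (hF.re_ofReal.iterated_deriv n).differentiableAt

lemma abs_iteratedDeriv_re_ofReal_le {r C : ℝ} (n : ℕ) (hr : 0 < r)
    (hF : DiffContOnCl ℂ F (Metric.ball x r)) (hC : ∀ z ∈ Metric.sphere (x : ℂ) r, ‖F z‖ ≤ C) :
    |iteratedDeriv n (fun y : ℝ ↦ (F y).re) x| ≤ n.factorial * C / r ^ n := by
  have hFx : AnalyticAt ℂ F x :=
    hF.differentiableOn.analyticAt (Metric.ball_mem_nhds _ hr)
  rw [iteratedDeriv_re_ofReal hFx]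
  exact (Complex.abs_re_le_norm _).trans
    (Complex.norm_iteratedDeriv_le_of_forall_mem_sphere_norm_le n hr hF hC)

end RealPart

section ComplexPower

lemma re_ofReal_mul_cpow_ofReal {r : ℝ} (hr : 0 < r) (w : ℂ) (t : ℝ) :
    ((r * w) ^ (t : ℂ)).re = r ^ t * (w ^ (t : ℂ)).re := by
  rw [Complex.cpow_ofReal_re, Complex.cpow_ofReal_re, Complex.arg_real_mul w hr, norm_mul,
    Complex.norm_of_nonneg hr.le, mul_rpow hr.le (norm_nonneg w), mul_assoc]

lemma exists_forall_closedBall_one_le_re_cpow (s : ℂ) {c : ℝ} (hc : c < 1) :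
    ∃ θ ∈ Ioo (0 : ℝ) 1, ∀ w ∈ Metric.closedBall (1 : ℂ) θ, c ≤ (w ^ s).re := by
  have hcont : ContinuousAt (fun w : ℂ ↦ (w ^ s).re) 1 :=
    Complex.continuous_re.continuousAt.comp
      (continuousAt_id.cpow continuousAt_const Complex.one_mem_slitPlane)
  have hnear : ∀ᶠ w in 𝓝 (1 : ℂ), c ≤ (w ^ s).re :=
    hcont.eventually (Ici_mem_nhds (by simpa only [Complex.one_cpow, Complex.one_re] using hc))
  have hsmall : ∀ᶠ θ in 𝓝[>] (0 : ℝ), ∀ w ∈ Metric.closedBall (1 : ℂ) θ, c ≤ (w ^ s).re :=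
    (eventually_closedBall_subset hnear).filter_mono nhdsWithin_le_nhds
  obtain ⟨θ, hθ, hθ01⟩ := (hsmall.and (Ioo_mem_nhdsGT one_pos)).exists
  exact ⟨θ, hθ01, hθ⟩

lemma exists_forall_closedBall_mul_rpow_le_re_cpow (t : ℝ) {c : ℝ} (hc : c < 1) :
    ∃ θ ∈ Ioo (0 : ℝ) 1, ∀ r : ℝ, 0 < r → ∀ z ∈ Metric.closedBall (r : ℂ) (θ * r),
      c * r ^ t ≤ (z ^ (t : ℂ)).re := by
  obtain ⟨θ, hθ, hre⟩ := exists_forall_closedBall_one_le_re_cpow t hc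
  refine ⟨θ, hθ, fun r hr z hz ↦ ?_⟩
  have hr' : (r : ℂ) ≠ 0 := Complex.ofReal_ne_zero.2 hr.ne'
  have hzr : z / r ∈ Metric.closedBall (1 : ℂ) θ := by
    rw [mem_closedBall_iff_norm] at hz ⊢
    rwa [div_sub_one hr', norm_div, Complex.norm_of_nonneg hr.le, div_le_iff₀ hr]
  calc c * r ^ t ≤ ((z / r) ^ (t : ℂ)).re * r ^ t := by gcongr; exact hre _ hzr
    _ = ((r * (z / r)) ^ (t : ℂ)).re := by rw [re_ofReal_mul_cpow_ofReal hr, mul_comm]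
    _ = (z ^ (t : ℂ)).re := by rw [mul_div_cancel₀ z hr']

lemma closedBall_ofReal_subset_slitPlane {r ε : ℝ} (h : ε < r) :
    Metric.closedBall (r : ℂ) ε ⊆ Complex.slitPlane := fun z hz ↦ by
  have hre : |z.re - r| ≤ ε := by
    simpa using (Complex.abs_re_le_norm (z - r)).trans (mem_closedBall_iff_norm.1 hz)
  exact Or.inl (by linarith [(abs_le.1 hre).1])

end ComplexPower

section ExponentialDecay

variable {a σ x : ℝ}

lemma pow_le_factorial_rpow_mul_exp (hσ : 0 < σ) (hx : 0 ≤ x) (p : ℕ) :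
    x ^ p ≤ (p.factorial : ℝ) ^ (1 / σ) * exp (x ^ σ / σ) := by
  have hexp : (x ^ σ) ^ p ≤ p.factorial * exp (x ^ σ) :=
    (div_le_iff₀' (by positivity)).1 (pow_div_factorial_le_exp _ (by positivity) p)
  calc x ^ p = ((x ^ σ) ^ p) ^ (1 / σ) := by
        rw [← rpow_natCast, ← rpow_natCast, ← rpow_mul hx, ← rpow_mul hx]
        congr 1
        field_simp
    _ ≤ (p.factorial * exp (x ^ σ)) ^ (1 / σ) := by gcongr
    _ = (p.factorial : ℝ) ^ (1 / σ) * exp (x ^ σ / σ) := by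
        rw [mul_rpow (by positivity) (by positivity), ← exp_mul, mul_one_div]

lemma exp_neg_mul_rpow_neg_div_pow_le (ha : 0 < a) (hσ : 0 < σ) (hx : 0 < x) (p : ℕ) :
    exp (-(a * x ^ (-σ))) / x ^ p ≤
      (p.factorial : ℝ) ^ (1 / σ) / ((a * σ) ^ (1 / σ)) ^ p := by
  have hexponent : ((a * σ) ^ (1 / σ) / x) ^ σ / σ = a * x ^ (-σ) := by
    rw [div_rpow (by positivity) hx.le, ← rpow_mul (by positivity), one_div_mul_cancel hσ.ne',
      rpow_one, rpow_neg hx.le]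
    field_simp
  have hpow := pow_le_factorial_rpow_mul_exp hσ (x := (a * σ) ^ (1 / σ) / x) (by positivity) p
  rw [hexponent, div_pow, div_le_iff₀ (by positivity)] at hpow
  rw [exp_neg, div_le_div_iff₀ (by positivity) (by positivity), inv_mul_le_iff₀ (exp_pos _)]
  linarith

lemma isLittleO_exp_neg_mul_rpow_neg_div_pow (ha : 0 < a) (hσ : 0 < σ) (p k : ℕ) :
    (fun x ↦ exp (-(a * x ^ (-σ))) / x ^ p) =o[𝓝[>] 0] fun x ↦ x ^ k := by
  have hbig : (fun x ↦ exp (-(a * x ^ (-σ))) / x ^ p) =O[𝓝[>] 0] fun x ↦ x ^ (k + 1) := by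
    refine .of_bound
      (((p + (k + 1)).factorial : ℝ) ^ (1 / σ) / ((a * σ) ^ (1 / σ)) ^ (p + (k + 1))) ?_
    filter_upwards [self_mem_nhdsWithin] with x (hx : 0 < x)
    rw [norm_of_nonneg (by positivity), norm_of_nonneg (by positivity),
      ← div_le_iff₀ (by positivity), div_div, ← pow_add]
    exact exp_neg_mul_rpow_neg_div_pow_le ha hσ hx _
  exact hbig.trans_isLittleO
    ((Asymptotics.isLittleO_pow_pow k.lt_succ_self).mono nhdsWithin_le_nhds)

end ExponentialDecay

/-- The holomorphic extension `z ↦ exp (-z ^ (-σ))` to the slit plane of `gevreyBump σ` on the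
positive half-line, where Cauchy's estimates are applied; outside the slit plane its values depend
on the branch of `cpow` and are irrelevant. -/
noncomputable def complexGevreyBump (σ : ℝ) (z : ℂ) : ℂ :=
  Complex.exp (-z ^ ((-σ : ℝ) : ℂ))

lemma analyticOnNhd_complexGevreyBump (σ : ℝ) :
    AnalyticOnNhd ℂ (complexGevreyBump σ) Complex.slitPlane := fun _ hz ↦
  ((analyticAt_id.cpow analyticAt_const hz).neg).cexp

lemma gevreyBump_eq_indicator (σ : ℝ) :
    gevreyBump σ = (Ioi 0).indicator fun x : ℝ ↦ (complexGevreyBump σ x).re := by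
  ext x
  by_cases hx : 0 < x
  · rw [gevreyBump, if_pos hx, indicator_of_mem (mem_Ioi.2 hx), complexGevreyBump,
      ← Complex.ofReal_cpow hx.le, ← Complex.ofReal_neg, Complex.exp_ofReal_re, rpow_neg hx.le,
      neg_div, one_div]
  · rw [gevreyBump, if_neg hx, indicator_of_notMem (mt mem_Ioi.1 hx)]

lemma exists_abs_iteratedDeriv_re_complexGevreyBump_le (σ : ℝ) {c : ℝ} (hc : c < 1) :
    ∃ θ > 0, ∀ p : ℕ, ∀ x > 0,
      |iteratedDeriv p (fun y : ℝ ↦ (complexGevreyBump σ y).re) x| ≤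
        p.factorial / θ ^ p * (exp (-(c * x ^ (-σ))) / x ^ p) := by
  obtain ⟨θ, ⟨hθ0, hθ1⟩, hre⟩ := exists_forall_closedBall_mul_rpow_le_re_cpow (-σ) hc
  refine ⟨θ, hθ0, fun p x hx ↦ ?_⟩
  have hdiff : DiffContOnCl ℂ (complexGevreyBump σ) (Metric.ball x (θ * x)) :=
    ((analyticOnNhd_complexGevreyBump σ).differentiableOn.mono
      (closedBall_ofReal_subset_slitPlane (mul_lt_of_lt_one_left hx hθ1))).diffContOnCl_ball
      subset_rfl
  have hsphere : ∀ z ∈ Metric.sphere (x : ℂ) (θ * x),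
      ‖complexGevreyBump σ z‖ ≤ exp (-(c * x ^ (-σ))) := fun z hz ↦ by
    rw [complexGevreyBump, Complex.norm_exp, Complex.neg_re]
    gcongr
    exact hre x hx z (Metric.sphere_subset_closedBall hz)
  calc _ ≤ p.factorial * exp (-(c * x ^ (-σ))) / (θ * x) ^ p :=
        abs_iteratedDeriv_re_ofReal_le p (by positivity) hdiff hsphere
    _ = _ := by rw [mul_pow, mul_div_mul_comm]

lemma isLittleO_iteratedDeriv_re_complexGevreyBump {σ : ℝ} (hσ : 0 < σ) (p k : ℕ) :
    iteratedDeriv p (fun y : ℝ ↦ (complexGevreyBump σ y).re) =o[𝓝[>] 0] fun x ↦ x ^ k := by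
  obtain ⟨θ, -, hbound⟩ := exists_abs_iteratedDeriv_re_complexGevreyBump_le σ one_half_lt_one
  refine Asymptotics.IsBigO.trans_isLittleO (.of_bound (p.factorial / θ ^ p) ?_)
    (isLittleO_exp_neg_mul_rpow_neg_div_pow one_half_pos hσ p k)
  filter_upwards [self_mem_nhdsWithin] with x (hx : 0 < x)
  rw [norm_eq_abs, norm_of_nonneg (by positivity)]
  exact hbound p x hx

lemma exists_abs_iteratedDeriv_re_complexGevreyBump_le_factorial_rpow {σ : ℝ} (hσ : 0 < σ) :
    ∃ R > 0, ∀ p : ℕ, ∀ x > 0,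
      |iteratedDeriv p (fun y : ℝ ↦ (complexGevreyBump σ y).re) x| ≤
        (p.factorial : ℝ) ^ (1 + 1 / σ) / R ^ p := by
  obtain ⟨θ, hθ, hcauchy⟩ := exists_abs_iteratedDeriv_re_complexGevreyBump_le σ one_half_lt_one
  refine ⟨θ * (1 / 2 * σ) ^ (1 / σ), by positivity, fun p x hx ↦ ?_⟩
  calc _ ≤ p.factorial / θ ^ p * (exp (-(1 / 2 * x ^ (-σ))) / x ^ p) := hcauchy p x hx
    _ ≤ p.factorial / θ ^ p *
        ((p.factorial : ℝ) ^ (1 / σ) / ((1 / 2 * σ) ^ (1 / σ)) ^ p) := by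
      gcongr ?_ * ?_
      exact exp_neg_mul_rpow_neg_div_pow_le one_half_pos hσ hx p
    _ = _ := by
      rw [div_mul_div_comm, ← mul_pow, rpow_one_add' (by positivity) (by positivity)]

theorem stmt13_general (σ : ℝ) (hσ : 0 < σ) :
    ContDiff ℝ (⊤ : ℕ∞) (gevreyBump σ) ∧
    ∃ R : ℝ, 0 < R ∧ ∀ (p : ℕ) (ρ : ℝ),
      |iteratedDeriv p (gevreyBump σ) ρ| ≤ (p.factorial : ℝ) ^ (1 + 1 / σ) / R ^ p := by
  have hdiff (n : ℕ) (x : ℝ) (hx : x ∈ Ioi 0) :=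
    differentiableAt_iteratedDeriv_re_ofReal
      (analyticOnNhd_complexGevreyBump σ x (Complex.ofReal_mem_slitPlane.2 hx)) n
  have hflat (n : ℕ) : iteratedDeriv n (fun y : ℝ ↦ (complexGevreyBump σ y).re) =o[𝓝[>] 0]
      fun x ↦ x - 0 := by
    simpa only [pow_one, sub_zero] using isLittleO_iteratedDeriv_re_complexGevreyBump hσ n 1
  obtain ⟨R, hR, hgevrey⟩ := exists_abs_iteratedDeriv_re_complexGevreyBump_le_factorial_rpow hσ
  rw [gevreyBump_eq_indicator]
  refine ⟨contDiff_indicator_Ioi hdiff hflat, R, hR, fun p ρ ↦ ?_⟩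
  rw [iteratedDeriv_indicator_Ioi hdiff hflat]
  by_cases hρ : ρ ∈ Ioi 0
  · rw [indicator_of_mem hρ]
    exact hgevrey p ρ hρ
  · rw [indicator_of_notMem hρ, abs_zero]
    positivity

theorem stmt13 (σ : ℝ) (hσ : 0 < σ) :
    -- f is C^∞ on ℝ
    ContDiff ℝ (⊤ : ℕ∞) (gevreyBump σ) ∧
    -- f is Gevrey of order s = 1 + 1/σ on every compact interval
    (∀ a b : ℝ, a ≤ b →
      ∃ C R : ℝ, 0 < C ∧ 0 < R ∧
        ∀ p : ℕ, ∀ ρ ∈ Set.Icc a b,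
          |iteratedDeriv p (gevreyBump σ) ρ|
            ≤ C * (p.factorial : ℝ) ^ (1 + 1 / σ) / R ^ p) := by
  obtain ⟨hsmooth, R, hR, hbound⟩ := stmt13_general σ hσ
  exact ⟨hsmooth, fun _ _ _ ↦
    ⟨1, R, one_pos, hR, fun p ρ _ ↦ by simpa only [one_mul] using hbound p ρ⟩⟩
end

section
/- Define E(t,x) := e^{i x²/(4t)} / √(4π i t) for real t ≠ 0 and x ∈ ℝ. Then for every integer k ≥ 1 and all (t,x) with t ≠ 0, the time derivatives of ∂_x E satisfy the recurrence ∂_t^{k+1} ∂_x E(t,x) = −1/(4t²) · [ (i x² + 2t(4k+3)) · ∂_t^k ∂_x E(t,x) + 2k(2k+1) · ∂_t^{k−1} ∂_x E(t,x) ]. -/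
open MeasureTheory Complex Real Set Filter

/-- The fundamental solution `E(t,x) = e^{i x²/(4t)} / √(4π i t)` of the 1D Schrödinger
equation, the complex square root being the principal branch. -/
noncomputable def E (t x : ℝ) : ℂ :=
  Complex.exp (Complex.I * (x : ℂ) ^ 2 / (4 * (t : ℂ))) /
    ((4 * (Real.pi : ℂ) * Complex.I * (t : ℂ)) ^ ((1 : ℂ) / 2))

/-- The odd extension of `θ₀ : (0,1) → ℂ` to `ℝ`. -/
noncomputable def thetaOdd (θ₀ : ℝ → ℂ) (x : ℝ) : ℂ :=
  if 0 < x ∧ x < 1 then θ₀ x else if -1 < x ∧ x < 0 then -θ₀ (-x) else 0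

/-- `θ⁻(t,x) = ∫_{-1}^1 E(t, x-y) θ₀^odd(y) dy`. -/
noncomputable def thetaMinus (θ₀ : ℝ → ℂ) (t x : ℝ) : ℂ :=
  ∫ y in Set.Ioo (-1 : ℝ) 1, E t (x - y) * thetaOdd θ₀ y

open scoped Topology

/-!
For fixed `x`, the function `G = ∂ₓE(·, x) = (i x / 2t) E(·, x)` solves the first-order linear
equation `t² G' = (-i x² / 4 - 3t / 2) G` away from `t = 0`. Its coefficients are polynomials of
degree two and one, so only three terms survive when Leibniz' rule is used to differentiate the
equation `k` times, and these terms are the recurrence.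
-/

section FirstOrderEquation

variable {𝕜 F 𝔸 : Type*} [NontriviallyNormedField 𝕜] [NormedAddCommGroup F] [NormedSpace 𝕜 F]
  [NormedRing 𝔸] [NormedAlgebra 𝕜 𝔸] {t : 𝕜} {n : ℕ}

theorem iteratedDeriv_fun_id_smul {f : 𝕜 → F} (hf : ContDiffAt 𝕜 n f t) :
    iteratedDeriv n (fun s => s • f s) t =
      t • iteratedDeriv n f t + n • iteratedDeriv (n - 1) f t := by
  have leibniz := iteratedDerivWithin_smul (mem_univ t) uniqueDiffOn_univ
    (contDiffAt_id (𝕜 := 𝕜) (n := n)).contDiffWithinAt hf.contDiffWithinAt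
  simp only [iteratedDerivWithin_univ, iteratedDeriv_id] at leibniz
  refine leibniz.trans ?_
  cases n with
  | zero => simp
  | succ n =>
    rw [Finset.sum_range_succ', Finset.sum_range_succ']
    simp [add_comm]

theorem iteratedDeriv_succ_sq_smul_deriv {f : 𝕜 → F} (hf : ContDiffAt 𝕜 (n + 2) f t) :
    iteratedDeriv (n + 1) (fun s => s ^ 2 • deriv f s) t =
      t ^ 2 • iteratedDeriv (n + 2) f t + (2 * (n + 1)) • t • iteratedDeriv (n + 1) f t +
        (n * (n + 1)) • iteratedDeriv n f t := by
  have hf' : ContDiffAt 𝕜 (n + 1 : ℕ) (deriv f) t := hf.derivWithin (by norm_cast)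
  have iteratedDeriv_id_smul_deriv : iteratedDeriv n (fun s => s • deriv f s) t =
      t • iteratedDeriv (n + 1) f t + n • iteratedDeriv n f t := by
    rw [iteratedDeriv_fun_id_smul (hf'.of_le (by norm_cast; omega)), iteratedDeriv_succ']
    cases n <;> simp [iteratedDeriv_succ']
  have hid_smul : ContDiffAt 𝕜 (n + 1 : ℕ) (fun s => s • deriv f s) t := contDiffAt_id.smul hf'
  simp only [pow_two, mul_smul _ _ (deriv f _)]
  rw [iteratedDeriv_fun_id_smul hid_smul, iteratedDeriv_fun_id_smul hf',
    Nat.add_sub_cancel, iteratedDeriv_id_smul_deriv, ← iteratedDeriv_succ', ← iteratedDeriv_succ']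
  module

theorem sq_smul_iteratedDeriv_add_two_of_sq_smul_deriv_eq {f : 𝕜 → 𝔸} {b c : 𝔸}
    (hf : ContDiffAt 𝕜 (n + 2) f t)
    (hode : ∀ᶠ s in 𝓝 t, s ^ 2 • deriv f s = b * f s + s • (c * f s)) :
    t ^ 2 • iteratedDeriv (n + 2) f t =
      b * iteratedDeriv (n + 1) f t +
        t • (c * iteratedDeriv (n + 1) f t - (2 * (n + 1)) • iteratedDeriv (n + 1) f t) +
        (n + 1) • (c * iteratedDeriv n f t - n • iteratedDeriv n f t) := by
  have hf₁ : ContDiffAt 𝕜 (n + 1 : ℕ) f t := hf.of_le (by norm_cast; omega)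
  have hf₀ : ContDiffAt 𝕜 n f t := hf.of_le (by norm_cast; omega)
  have hbf : ContDiffAt 𝕜 (n + 1 : ℕ) (fun s => b * f s) t := contDiffAt_const.mul hf₁
  have hcf : ContDiffAt 𝕜 (n + 1 : ℕ) (fun s => c * f s) t := contDiffAt_const.mul hf₁
  have hid_smul : ContDiffAt 𝕜 (n + 1 : ℕ) (fun s => s • (c * f s)) t := contDiffAt_id.smul hcf
  have differentiated := Filter.EventuallyEq.iteratedDeriv_eq (n + 1) hode
  rw [iteratedDeriv_succ_sq_smul_deriv hf, iteratedDeriv_fun_add hbf hid_smul,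
    iteratedDeriv_fun_id_smul hcf, Nat.add_sub_cancel, iteratedDeriv_const_mul b hf₁,
    iteratedDeriv_const_mul c hf₁, iteratedDeriv_const_mul c hf₀, add_assoc,
    ← eq_sub_iff_add_eq] at differentiated
  rw [differentiated]
  module

end FirstOrderEquation

section Kernel

theorem hasDerivAt_const_mul_cpow_const {a z : ℂ} (r : ℂ) (h : a * z ∈ slitPlane) :
    HasDerivAt (fun w => (a * w) ^ r) (r / z * (a * z) ^ r) z := by
  have haz : a * z ≠ 0 := slitPlane_ne_zero h
  refine ((hasDerivAt_const_mul a).cpow_const h).congr_deriv ?_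
  rw [cpow_sub _ _ haz, cpow_one]
  have := left_ne_zero_of_mul haz
  have := right_ne_zero_of_mul haz
  field_simp

variable {t : ℝ}

theorem four_pi_I_mul_mem_slitPlane (ht : t ≠ 0) : 4 * (π : ℂ) * I * t ∈ slitPlane :=
  mem_slitPlane_iff.mpr (Or.inr (by simp [ht, Real.pi_ne_zero]))

theorem sqrt_four_pi_I_mul_ne_zero (ht : t ≠ 0) : (4 * (π : ℂ) * I * t) ^ ((1 : ℂ) / 2) ≠ 0 := by
  simp [cpow_eq_zero_iff, ht, Real.pi_ne_zero]

theorem contDiffAt_E_time (ht : t ≠ 0) (x : ℝ) {n : WithTop ℕ∞} :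
    ContDiffAt ℝ n (fun s => E s x) t := by
  have hden := sqrt_four_pi_I_mul_ne_zero ht
  have htime : 4 * (t : ℂ) ≠ 0 := by simp [ht]
  have hslit := four_pi_I_mul_mem_slitPlane ht
  have holomorphic : AnalyticAt ℂ (fun z : ℂ =>
      cexp (I * (x : ℂ) ^ 2 / (4 * z)) / (4 * (π : ℂ) * I * z) ^ ((1 : ℂ) / 2)) t := by
    fun_prop (disch := assumption)
  exact (holomorphic.contDiffAt.restrict_scalars ℝ).comp t ofRealCLM.contDiff.contDiffAt

theorem hasDerivAt_E_time (ht : t ≠ 0) (x : ℝ) :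
    HasDerivAt (fun s => E s x) ((-(I * x ^ 2) / (4 * t ^ 2) - 1 / (2 * t)) * E t x) t := by
  have htc : (t : ℂ) ≠ 0 := ofReal_ne_zero.mpr ht
  have hphase : HasDerivAt (fun z : ℂ => I * (x : ℂ) ^ 2 / (4 * z))
      (-(I * x ^ 2) / (4 * t ^ 2)) t := by
    refine ((hasDerivAt_const (t : ℂ) (I * (x : ℂ) ^ 2)).fun_div (hasDerivAt_const_mul 4)
      (by simp [ht])).congr_deriv ?_
    field_simp
    ring
  have hden := sqrt_four_pi_I_mul_ne_zero ht
  have hsqrt := hasDerivAt_const_mul_cpow_const (1 / 2) (four_pi_I_mul_mem_slitPlane ht)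
  refine (hphase.cexp.fun_div hsqrt hden).comp_ofReal.congr_deriv ?_
  rw [E]
  field_simp

theorem deriv_E_space (t x : ℝ) : deriv (fun y => E t y) x = I * x / (2 * t) * E t x := by
  have hphase : HasDerivAt (fun z : ℂ => I * z ^ 2 / (4 * t)) (I * x / (2 * t)) x := by
    refine (((hasDerivAt_pow 2 (x : ℂ)).const_mul I).div_const (4 * (t : ℂ))).congr_deriv ?_
    push_cast
    ring
  refine (hphase.cexp.div_const _).comp_ofReal.deriv.trans ?_
  rw [E]
  ring

theorem contDiffAt_deriv_E_space (ht : t ≠ 0) (x : ℝ) {n : WithTop ℕ∞} :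
    ContDiffAt ℝ n (fun s => deriv (fun y => E s y) x) t := by
  have htwo : 2 * (t : ℂ) ≠ 0 := by simp [ht]
  have holomorphic : AnalyticAt ℂ (fun z : ℂ => I * x / (2 * z)) t := by
    fun_prop (disch := assumption)
  have hfactor : ContDiffAt ℝ n (fun s : ℝ => I * x / (2 * (s : ℂ))) t :=
    (holomorphic.contDiffAt.restrict_scalars ℝ).comp t ofRealCLM.contDiff.contDiffAt
  simpa only [deriv_E_space] using hfactor.mul (contDiffAt_E_time ht x)

theorem sq_mul_deriv_deriv_E_space (ht : t ≠ 0) (x : ℝ) :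
    t ^ 2 * deriv (fun s => deriv (fun y => E s y) x) t =
      -(I * x ^ 2 / 4) * deriv (fun y => E t y) x + t * (-(3 / 2) * deriv (fun y => E t y) x) := by
  have htc : (t : ℂ) ≠ 0 := ofReal_ne_zero.mpr ht
  have hfactor : HasDerivAt (fun s : ℝ => I * x / (2 * (s : ℂ))) (-(I * x) / (2 * t ^ 2)) t := by
    refine ((hasDerivAt_const (t : ℂ) (I * (x : ℂ))).fun_div (hasDerivAt_const_mul 2)
      (by simp [ht])).comp_ofReal.congr_deriv ?_
    field_simp
    ring
  simp only [deriv_E_space]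
  rw [(hfactor.fun_mul (hasDerivAt_E_time ht x)).deriv]
  field_simp
  ring

end Kernel

theorem stmt18 (k : ℕ) (hk : 1 ≤ k) (t : ℝ) (ht : t ≠ 0) (x : ℝ) :
    -- ∂_t^{k+1} ∂_x E = -1/(4t²) [ (i x² + 2t(4k+3)) ∂_t^k ∂_x E + 2k(2k+1) ∂_t^{k-1} ∂_x E ]
    iteratedDeriv (k + 1) (fun t' => deriv (fun x' => E t' x') x) t
      = -1 / (4 * (t : ℂ) ^ 2) *
          ((Complex.I * (x : ℂ) ^ 2 + 2 * (t : ℂ) * (4 * (k : ℂ) + 3)) *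
              iteratedDeriv k (fun t' => deriv (fun x' => E t' x') x) t
            + 2 * (k : ℂ) * (2 * (k : ℂ) + 1) *
              iteratedDeriv (k - 1) (fun t' => deriv (fun x' => E t' x') x) t) := by
  obtain ⟨n, rfl⟩ : ∃ n, k = n + 1 := ⟨k - 1, by omega⟩
  have hode : ∀ᶠ s : ℝ in 𝓝 t, s ^ 2 • deriv (fun t' => deriv (fun x' => E t' x') x) s =
      -(I * x ^ 2 / 4) * deriv (fun x' => E s x') x +
        s • (-(3 / 2) * deriv (fun x' => E s x') x) := by
    filter_upwards [eventually_ne_nhds ht] with s hs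
    simpa only [real_smul, ofReal_pow] using sq_mul_deriv_deriv_E_space hs x
  have hrec := sq_smul_iteratedDeriv_add_two_of_sq_smul_deriv_eq (n := n)
    (contDiffAt_deriv_E_space ht x) hode
  simp only [real_smul, nsmul_eq_mul] at hrec
  have htc : (t : ℂ) ≠ 0 := ofReal_ne_zero.mpr ht
  push_cast at hrec ⊢
  field_simp
  linear_combination 4 * hrec
end
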